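/- Let z* be a local minimizer of the MPSC at which MPSC-LICQ holds, i.e., the gradients {∇g_i(z*) : i ∈ I_g*} ∪ {∇h_j(z*) : j = 1,…,q} ∪ {∇G_i(z*) : i ∈ I_G* ∪ I_GH*} ∪ {∇H_i(z*) : i ∈ I_H* ∪ I_GH*} are linearly independent. Then z* is S-stationary: there exist multipliers (λ^g, λ^h, λ^G, λ^H) with 0 = ∇f(z*) + Σ_{i∈I_g*} λ_i^g ∇g_i(z*) + Σ_{j=1}^q λ_j^h ∇h_j(z*) + Σ_{i=1}^m (λ_i^G ∇G_i(z*) + λ_i^H ∇H_i(z*)), λ_i^g ≥ 0 for i ∈ I_g*, λ_i^G = 0 for i ∈ I_H*, λ_i^H = 0 for i ∈ I_G*, and λ_i^G = λ_i^H = 0 for all i ∈ I_GH*. -/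

import Mathlib

open scoped Classical InnerProductSpace
open Filter Topology

noncomputable section

/-- Euclidean space `ℝⁿ`. -/
abbrev Euc (n : ℕ) : Type := EuclideanSpace ℝ (Fin n)

/-- Data of a mathematical program with switching constraints (MPSC):
`min f(z)` s.t. `g(z) ≤ 0`, `h(z) = 0`, `Gᵢ(z)Hᵢ(z) = 0 (i = 1,…,m)`,
with all defining functions continuously differentiable (gradients `f'`, `g'`, … are
genuine gradient maps, and they are continuous). -/
structure MPSC (n p q m : ℕ) where
  f : Euc n → ℝ
  g : Fin p → Euc n → ℝ
  h : Fin q → Euc n → ℝ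
  G : Fin m → Euc n → ℝ
  H : Fin m → Euc n → ℝ
  f' : Euc n → Euc n
  g' : Fin p → Euc n → Euc n
  h' : Fin q → Euc n → Euc n
  G' : Fin m → Euc n → Euc n
  H' : Fin m → Euc n → Euc n
  grad_f : ∀ z, HasGradientAt f (f' z) z
  grad_g : ∀ i z, HasGradientAt (g i) (g' i z) z
  grad_h : ∀ j z, HasGradientAt (h j) (h' j z) z
  grad_G : ∀ i z, HasGradientAt (G i) (G' i z) z
  grad_H : ∀ i z, HasGradientAt (H i) (H' i z) z
  cont_f' : Continuous f'
  cont_g' : ∀ i, Continuous (g' i)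
  cont_h' : ∀ j, Continuous (h' j)
  cont_G' : ∀ i, Continuous (G' i)
  cont_H' : ∀ i, Continuous (H' i)

namespace MPSC

variable {n p q m : ℕ} (P : MPSC n p q m)

/-- The feasible region `F` of the MPSC. -/
def Feas : Set (Euc n) :=
  {z | (∀ i, P.g i z ≤ 0) ∧ (∀ j, P.h j z = 0) ∧ ∀ i, P.G i z * P.H i z = 0}

/-- Active inequality constraints `I_g*`. -/
def Ig (zs : Euc n) : Set (Fin p) := {i | P.g i zs = 0}

/-- `I_G* = {i : Gᵢ(z*) = 0, Hᵢ(z*) ≠ 0}`. -/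
def IGs (zs : Euc n) : Set (Fin m) := {i | P.G i zs = 0 ∧ P.H i zs ≠ 0}

/-- `I_H* = {i : Gᵢ(z*) ≠ 0, Hᵢ(z*) = 0}`. -/
def IHs (zs : Euc n) : Set (Fin m) := {i | P.G i zs ≠ 0 ∧ P.H i zs = 0}

/-- `I_GH* = {i : Gᵢ(z*) = Hᵢ(z*) = 0}`. -/
def IGH (zs : Euc n) : Set (Fin m) := {i | P.G i zs = 0 ∧ P.H i zs = 0}

/-- `I_g*(d)`. -/
def Igd (zs d : Euc n) : Set (Fin p) := {i | P.g i zs = 0 ∧ ⟪P.g' i zs, d⟫_ℝ = 0}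

/-- `I_G*(d)`. -/
def IGd (zs d : Euc n) : Set (Fin m) :=
  {i | i ∈ P.IGH zs ∧ ⟪P.G' i zs, d⟫_ℝ = 0 ∧ ⟪P.H' i zs, d⟫_ℝ ≠ 0}

/-- `I_H*(d)`. -/
def IHd (zs d : Euc n) : Set (Fin m) :=
  {i | i ∈ P.IGH zs ∧ ⟪P.G' i zs, d⟫_ℝ ≠ 0 ∧ ⟪P.H' i zs, d⟫_ℝ = 0}

/-- `I_GH*(d)`. -/
def IGHd (zs d : Euc n) : Set (Fin m) :=
  {i | i ∈ P.IGH zs ∧ ⟪P.G' i zs, d⟫_ℝ = 0 ∧ ⟪P.H' i zs, d⟫_ℝ = 0}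

/-- The linearization cone `L(z*)` of the MPSC at `z*`. -/
def LinCone (zs : Euc n) : Set (Euc n) :=
  {d | (∀ i ∈ P.Ig zs, ⟪P.g' i zs, d⟫_ℝ ≤ 0) ∧ (∀ j, ⟪P.h' j zs, d⟫_ℝ = 0) ∧
       (∀ i ∈ P.IGs zs, ⟪P.G' i zs, d⟫_ℝ = 0) ∧ (∀ i ∈ P.IHs zs, ⟪P.H' i zs, d⟫_ℝ = 0) ∧
       (∀ i ∈ P.IGH zs, ⟪P.G' i zs, d⟫_ℝ * ⟪P.H' i zs, d⟫_ℝ = 0)}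

/-- The critical cone `C(z*)`. -/
def Crit (zs : Euc n) : Set (Euc n) := {d ∈ P.LinCone zs | ⟪P.f' zs, d⟫_ℝ ≤ 0}

/-- `(λ^g, λ^h, λ^G, λ^H)` is an M-multiplier in direction `d` at `z*`. -/
def IsMMultDir (zs d : Euc n) (lg : Fin p → ℝ) (lh : Fin q → ℝ) (lG lH : Fin m → ℝ) : Prop :=
  ((0 : Euc n) = P.f' zs
      + (∑ i ∈ Finset.univ.filter (fun i => i ∈ P.Igd zs d), lg i • P.g' i zs)
      + (∑ j, lh j • P.h' j zs) + (∑ i, (lG i • P.G' i zs + lH i • P.H' i zs))) ∧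
  (∀ i ∈ P.Igd zs d, 0 ≤ lg i) ∧ (∀ i ∉ P.Igd zs d, lg i = 0) ∧
  (∀ i, i ∈ P.IHs zs ∪ P.IHd zs d → lG i = 0) ∧
  (∀ i, i ∈ P.IGs zs ∪ P.IGd zs d → lH i = 0) ∧
  ∀ i ∈ P.IGHd zs d, lG i * lH i = 0

/-- `z*` is M-stationary in direction `d`. -/
def MStatDir (zs d : Euc n) : Prop :=
  ∃ (lg : Fin p → ℝ) (lh : Fin q → ℝ) (lG lH : Fin m → ℝ), P.IsMMultDir zs d lg lh lG lH

/-- `z*` is S-stationary in direction `d`. -/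
def SStatDir (zs d : Euc n) : Prop :=
  ∃ (lg : Fin p → ℝ) (lh : Fin q → ℝ) (lG lH : Fin m → ℝ),
    P.IsMMultDir zs d lg lh lG lH ∧ ∀ i ∈ P.IGHd zs d, lG i = 0 ∧ lH i = 0

/-- MPSC-LICQ in direction `d` at `z*`. -/
def LICQd (zs d : Euc n) : Prop :=
  LinearIndependent ℝ
    (Sum.elim (fun i : {i // i ∈ P.Igd zs d} => P.g' i.1 zs)
      (Sum.elim (fun j : Fin q => P.h' j zs)
        (Sum.elim (fun i : {i // i ∈ P.IGs zs ∪ P.IGd zs d ∪ P.IGHd zs d} => P.G' i.1 zs)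
          (fun i : {i // i ∈ P.IHs zs ∪ P.IHd zs d ∪ P.IGHd zs d} => P.H' i.1 zs))))

/-- MPSC-LICQ at `z*`. -/
def LICQ (zs : Euc n) : Prop :=
  LinearIndependent ℝ
    (Sum.elim (fun i : {i // i ∈ P.Ig zs} => P.g' i.1 zs)
      (Sum.elim (fun j : Fin q => P.h' j zs)
        (Sum.elim (fun i : {i // i ∈ P.IGs zs ∪ P.IGH zs} => P.G' i.1 zs)
          (fun i : {i // i ∈ P.IHs zs ∪ P.IGH zs} => P.H' i.1 zs))))

/-- MPSC quasi-normality at `z*` in direction `d`. -/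
def QuasiNormalDir (zs d : Euc n) : Prop :=
  ∀ (lg : Fin p → ℝ) (lh : Fin q → ℝ) (lG lH : Fin m → ℝ),
    ((0 : Euc n) = (∑ i, lg i • P.g' i zs) + (∑ j, lh j • P.h' j zs)
        + (∑ i, (lG i • P.G' i zs + lH i • P.H' i zs))) →
    ((∀ i ∈ P.Igd zs d, 0 ≤ lg i) ∧ (∀ i ∉ P.Igd zs d, lg i = 0) ∧
      (∀ i, i ∈ P.IGs zs ∪ P.IGd zs d → lH i = 0) ∧
      (∀ i, i ∈ P.IHs zs ∪ P.IHd zs d → lG i = 0) ∧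
      ∀ i ∈ P.IGHd zs d, lG i * lH i = 0) →
    (∃ (dk : ℕ → Euc n) (t : ℕ → ℝ),
      Tendsto dk atTop (𝓝 d) ∧ (∀ k, 0 < t k) ∧ Tendsto t atTop (𝓝 0) ∧
      ∀ k, (∀ i, lg i ≠ 0 → 0 < lg i * P.g i (zs + t k • dk k)) ∧
        (∀ j, lh j ≠ 0 → 0 < lh j * P.h j (zs + t k • dk k)) ∧
        (∀ i, lG i ≠ 0 → 0 < lG i * P.G i (zs + t k • dk k)) ∧
        (∀ i, lH i ≠ 0 → 0 < lH i * P.H i (zs + t k • dk k))) →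
    lg = 0 ∧ lh = 0 ∧ lG = 0 ∧ lH = 0

/-- MPSC directional quasi-normality at `z*`: quasi-normality in every direction of
the linearization cone. -/
def DirQuasiNormal (zs : Euc n) : Prop := ∀ d ∈ P.LinCone zs, P.QuasiNormalDir zs d

/-- `(λ^g, λ^h, λ^G, λ^H)` is an S-multiplier at `z*` (S-stationarity conditions). -/
def IsSMult (zs : Euc n) (lg : Fin p → ℝ) (lh : Fin q → ℝ) (lG lH : Fin m → ℝ) : Prop :=
  ((0 : Euc n) = P.f' zs
      + (∑ i ∈ Finset.univ.filter (fun i => i ∈ P.Ig zs), lg i • P.g' i zs)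
      + (∑ j, lh j • P.h' j zs) + (∑ i, (lG i • P.G' i zs + lH i • P.H' i zs))) ∧
  (∀ i ∈ P.Ig zs, 0 ≤ lg i) ∧ (∀ i ∈ P.IHs zs, lG i = 0) ∧ (∀ i ∈ P.IGs zs, lH i = 0) ∧
  ∀ i ∈ P.IGH zs, lG i = 0 ∧ lH i = 0

/-- `(λ^g, λ^h, λ^G, λ^H)` is an M-multiplier at `z*` (M-stationarity conditions). -/
def IsMMult (zs : Euc n) (lg : Fin p → ℝ) (lh : Fin q → ℝ) (lG lH : Fin m → ℝ) : Prop :=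
  ((0 : Euc n) = P.f' zs
      + (∑ i ∈ Finset.univ.filter (fun i => i ∈ P.Ig zs), lg i • P.g' i zs)
      + (∑ j, lh j • P.h' j zs) + (∑ i, (lG i • P.G' i zs + lH i • P.H' i zs))) ∧
  (∀ i ∈ P.Ig zs, 0 ≤ lg i) ∧ (∀ i ∈ P.IHs zs, lG i = 0) ∧ (∀ i ∈ P.IGs zs, lH i = 0) ∧
  ∀ i ∈ P.IGH zs, lG i * lH i = 0

/-- The rank `r(z*; d)` of the relevant family of gradients. -/
def rankd (zs d : Euc n) : ℕ :=
  Set.finrank ℝ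
    ((fun i => P.g' i zs) '' P.Igd zs d ∪ Set.range (fun j => P.h' j zs) ∪
      (fun i => P.G' i zs) '' (P.IGs zs ∪ P.IGd zs d ∪ P.IGHd zs d) ∪
      (fun i => P.H' i zs) '' (P.IHs zs ∪ P.IHd zs d ∪ P.IGHd zs d))

/-- `(J_g, J_G, J_H)` is an MPSC working set in direction `d`. -/
def IsWorkingSet (zs d : Euc n) (Jg : Finset (Fin p)) (JG JH : Finset (Fin m)) : Prop :=
  (∀ i ∈ Jg, i ∈ P.Igd zs d) ∧
  (∀ i ∈ JG, i ∈ P.IGs zs ∪ P.IGd zs d ∪ P.IGHd zs d) ∧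
  (∀ i ∈ JH, i ∈ P.IHs zs ∪ P.IHd zs d ∪ P.IGHd zs d) ∧
  JG ∪ JH = Finset.univ ∧
  Jg.card + q + JG.card + JH.card = P.rankd zs d ∧
  LinearIndependent ℝ
    (Sum.elim (fun i : {i // i ∈ Jg} => P.g' i.1 zs)
      (Sum.elim (fun j : Fin q => P.h' j zs)
        (Sum.elim (fun i : {i // i ∈ JG} => P.G' i.1 zs)
          (fun i : {i // i ∈ JH} => P.H' i.1 zs))))

/-- `z*` is strongly M-stationary in direction `d`. -/
def StronglyMStatDir (zs d : Euc n) : Prop :=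
  ∃ (Jg : Finset (Fin p)) (JG JH : Finset (Fin m)) (lg : Fin p → ℝ) (lh : Fin q → ℝ)
    (lG lH : Fin m → ℝ),
    P.IsWorkingSet zs d Jg JG JH ∧ P.IsMMultDir zs d lg lh lG lH ∧
    (∀ i ∉ Jg, lg i = 0) ∧ (∀ i ∉ JG, lG i = 0) ∧ (∀ i ∉ JH, lH i = 0) ∧
    ∀ i ∈ JG ∩ JH, lG i = 0 ∧ lH i = 0

/-- The MPSC constraint-violation residual. -/
def residual (z : Euc n) : ℝ :=
  (∑ i, max (P.g i z) 0) + (∑ j, |P.h j z|) + ∑ i, min |P.G i z| |P.H i z|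

/-- The MPSC local error bound property around `z*`. -/
def ErrorBound (zs : Euc n) : Prop :=
  ∃ V ∈ 𝓝 zs, ∃ α > (0 : ℝ), ∀ z ∈ V, Metric.infDist z P.Feas ≤ α * P.residual z

/-- Equality-constraint gradients (at `z`) of the branch problem `NLP(β₁, β₂)`. -/
def EqGrads (zs : Euc n) (b1 b2 : Set (Fin m)) (z : Euc n) : Set (Euc n) :=
  Set.range (fun j => P.h' j z) ∪ (fun i => P.G' i z) '' (P.IGs zs ∪ b1) ∪
    (fun i => P.H' i z) '' (P.IHs zs ∪ b2)

/-- The index set `I⁻` of the branch problem `NLP(β₁, β₂)` at `z*`. -/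
def Iminus (zs : Euc n) (b1 b2 : Set (Fin m)) : Set (Fin p) :=
  {l | l ∈ P.Ig zs ∧
    ∃ (lh : Fin q → ℝ) (lG lH : Fin m → ℝ) (mu : Fin p → ℝ),
      (∀ i, i ∉ P.IGs zs ∪ b1 → lG i = 0) ∧ (∀ i, i ∉ P.IHs zs ∪ b2 → lH i = 0) ∧
      (∀ i, 0 ≤ mu i) ∧ (∀ i, ¬(i ∈ P.Ig zs ∧ i ≠ l) → mu i = 0) ∧
      -(P.g' l zs) = (∑ j, lh j • P.h' j zs)
        + (∑ i, (lG i • P.G' i zs + lH i • P.H' i zs)) + (∑ i, mu i • P.g' i zs)}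

/-- CRSC holds at `z*` for the branch problem `NLP(β₁, β₂)`. -/
def CRSCpiece (zs : Euc n) (b1 b2 : Set (Fin m)) : Prop :=
  ∃ U ∈ 𝓝 zs, ∀ z ∈ U,
    Set.finrank ℝ ((fun i => P.g' i z) '' P.Iminus zs b1 b2 ∪ P.EqGrads zs b1 b2 z) =
      Set.finrank ℝ ((fun i => P.g' i zs) '' P.Iminus zs b1 b2 ∪ P.EqGrads zs b1 b2 zs)

/-- MPSC piecewise CRSC: CRSC holds for every branch problem `NLP(β₁, β₂)`. -/
def PiecewiseCRSC (zs : Euc n) : Prop :=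
  ∀ b1 b2 : Set (Fin m), b1 ∪ b2 = P.IGH zs → b1 ∩ b2 = ∅ → P.CRSCpiece zs b1 b2

/-- The set-valued map `K` (index sets frozen at `z*`, gradients at `z`). -/
def Kmap (zs z : Euc n) : Set (Euc n) :=
  {y | ∃ (lg : Fin p → ℝ) (lh : Fin q → ℝ) (lG lH : Fin m → ℝ),
      (∀ i, 0 ≤ lg i) ∧ (∀ i, i ∉ P.Ig zs → lg i = 0) ∧
      (∀ i ∈ P.IGs zs, lH i = 0) ∧ (∀ i ∈ P.IHs zs, lG i = 0) ∧
      (∀ i ∈ P.IGH zs, lG i * lH i = 0) ∧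
      y = (∑ i, lg i • P.g' i z) + (∑ j, lh j • P.h' j z)
          + (∑ i, (lG i • P.G' i z + lH i • P.H' i z))}

/-- `z*` is AM-regular. -/
def AMRegular (zs : Euc n) : Prop :=
  ∀ y : Euc n,
    (∃ zk yk : ℕ → Euc n, Tendsto zk atTop (𝓝 zs) ∧ Tendsto yk atTop (𝓝 y) ∧
      ∀ k, yk k ∈ P.Kmap zs (zk k)) → y ∈ P.Kmap zs zs

/-- The regular (Fréchet) normal cone to `A` at `x`. -/
def frechetNormalCone (A : Set (Euc n)) (x : Euc n) : Set (Euc n) :=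
  {ζ | ∀ ε > (0 : ℝ), ∃ δ > (0 : ℝ), ∀ y ∈ A, ‖y - x‖ < δ → ⟪ζ, y - x⟫_ℝ ≤ ε * ‖y - x‖}

/-- The generalized Guignard constraint qualification at `z*`. -/
def GGCQ (zs : Euc n) : Prop :=
  frechetNormalCone P.Feas zs = {ζ | ∀ d ∈ P.LinCone zs, ⟪ζ, d⟫_ℝ ≤ 0}

/-- Membership in the multiplier set `R_SC`. -/
def InRSC (zs : Euc n) (lg : Fin p → ℝ) (lh : Fin q → ℝ) (lG lH : Fin m → ℝ) : Prop :=
  (∀ i, i ∉ P.Ig zs → lg i = 0) ∧ (∀ i ∈ P.IHs zs, lG i = 0) ∧ ∀ i ∈ P.IGs zs, lH i = 0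

/-- Membership in the multiplier set `N_SC`. -/
def InNSC (zs : Euc n) (mg : Fin p → ℝ) (mh : Fin q → ℝ) (mG mH : Fin m → ℝ) : Prop :=
  P.InRSC zs mg mh mG mH ∧
  (0 : Euc n) = (∑ i, mg i • P.g' i zs) + (∑ j, mh j • P.h' j zs)
      + (∑ i, (mG i • P.G' i zs + mH i • P.H' i zs))

/-- `z*` is Q-stationary with respect to the bipartition `(β₁, β₂)` of `I_GH*`. -/
def QStat (zs : Euc n) (b1 b2 : Set (Fin m)) : Prop :=
  ∃ (lg mg : Fin p → ℝ) (lh mh : Fin q → ℝ) (lG lH mG mH : Fin m → ℝ),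
    P.InRSC zs lg lh lG lH ∧
    ((0 : Euc n) = P.f' zs + (∑ i, lg i • P.g' i zs) + (∑ j, lh j • P.h' j zs)
        + (∑ i, (lG i • P.G' i zs + lH i • P.H' i zs))) ∧
    P.InNSC zs mg mh mG mH ∧
    (∀ i ∈ P.Ig zs, max (mg i) 0 ≤ lg i) ∧
    (∀ i ∈ b1, lH i = 0 ∧ lG i = mG i) ∧
    ∀ i ∈ b2, lG i = 0 ∧ lH i = mH i

end MPSC

/-!
Near `z*` the feasible set contains the preimage, under the map of active constraints, of the cone
`S` cut out by `y_g ≤ 0`, `y_h = 0`, `y_G = 0` on `I_G*`, `y_H = 0` on `I_H*` and `y_G y_H = 0` on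
`I_GH*`. MPSC-LICQ makes the derivative of this map surjective, so by Lyusternik's theorem every
direction that the derivative sends into `S` is tangent to the feasible set. Hence `∇f(z*)` is
minus a combination of the active gradients whose coefficients lie in the polar of `S`. Since `S`
contains both axes of each plane `{(y_G, y_H)}` with index in `I_GH*`, the corresponding
multipliers vanish.
-/

theorem hasStrictFDerivAt_of_hasGradientAt_of_continuousAt {𝕜 E : Type*} [RCLike 𝕜]
    [NormedAddCommGroup E] [InnerProductSpace 𝕜 E] [CompleteSpace E] {f : E → 𝕜} {f' : E → E}
    {x : E} (hf : ∀ᶠ z in 𝓝 x, HasGradientAt f (f' z) z) (hf' : ContinuousAt f' x) :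
    HasStrictFDerivAt f (InnerProductSpace.toDual 𝕜 E (f' x)) x :=
  hasStrictFDerivAt_of_hasFDerivAt_of_continuousAt (hf.mono fun _ h => h.hasFDerivAt)
    ((InnerProductSpace.toDual 𝕜 E).continuous.continuousAt.comp hf')

section TangentCone

variable {E : Type*} [NormedAddCommGroup E] [NormedSpace ℝ E]

theorem mem_posTangentConeAt_of_hasDerivAt {s : Set E} {γ : ℝ → E} {v : E}
    (hγ : HasDerivAt γ v 0) (hs : ∃ᶠ t in 𝓝[>] 0, γ t ∈ s) : v ∈ posTangentConeAt s (γ 0) := by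
  refine mem_tangentConeAt_of_frequently (𝓝[>] (0 : ℝ)) (fun t => t⁻¹.toNNReal)
    (fun t => γ t - γ 0) ?_ (by simpa using hs) ?_
  · exact tendsto_sub_nhds_zero_iff.2 (hγ.continuousAt.mono_left nhdsWithin_le_nhds)
  · refine hγ.tendsto_slope_zero_right.congr' ?_
    filter_upwards [self_mem_nhdsWithin] with t ht
    rw [NNReal.smul_def, Real.coe_toNNReal _ (inv_nonneg.2 (Set.mem_Ioi.1 ht).le), zero_add]

variable {F : Type*} [NormedAddCommGroup F] [NormedSpace ℝ F] [CompleteSpace E]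

theorem exists_curve_of_hasStrictFDerivAt_equiv {Φ : E → F} {e : E ≃L[ℝ] F} {x : E}
    (hΦ : HasStrictFDerivAt Φ (e : E →L[ℝ] F) x) (v : E) :
    ∃ γ : ℝ → E, γ 0 = x ∧ HasDerivAt γ v 0 ∧ ∀ᶠ t in 𝓝 0, Φ (γ t) = Φ x + t • e v := by
  let line : ℝ → F := fun t => Φ x + t • e v
  have line_zero : line 0 = Φ x := by simp [line]
  have hline : HasDerivAt line (e v) 0 :=
    (((hasDerivAt_id 0).smul_const (e v)).const_add (Φ x)).congr_deriv (one_smul ℝ (e v))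
  have hinv : HasFDerivAt (hΦ.localInverse Φ e x) (e.symm : F →L[ℝ] E) (line 0) :=
    line_zero ▸ hΦ.to_localInverse.hasFDerivAt
  refine ⟨hΦ.localInverse Φ e x ∘ line, ?_, ?_, ?_⟩
  · rw [Function.comp_apply, line_zero, hΦ.localInverse_apply_image]
  · simpa using hinv.comp_hasDerivAt 0 hline
  · have htendsto : Tendsto line (𝓝 0) (𝓝 (Φ x)) := line_zero ▸ hline.continuousAt
    exact htendsto.eventually hΦ.eventually_right_inverse

variable [CompleteSpace F]

theorem exists_curve_of_hasStrictFDerivAt_of_range_eq_top {c : E → F} {c' : E →L[ℝ] F} {x : E}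
    (hc : HasStrictFDerivAt c c' x) (hsurj : c'.range = ⊤) (hker : c'.ker.ClosedComplemented)
    (v : E) :
    ∃ γ : ℝ → E, γ 0 = x ∧ HasDerivAt γ v 0 ∧ ∀ᶠ t in 𝓝 0, c (γ t) = c x + t • c' v := by
  -- Completing `c` by a projection onto `ker c'` gives a local diffeomorphism.
  obtain ⟨γ, hγ_zero, hγ, hcγ⟩ := exists_curve_of_hasStrictFDerivAt_equiv
    (hc.implicitFunctionDataOfComplemented c c' hsurj hker).hasStrictFDerivAt v
  exact ⟨γ, hγ_zero, hγ, hcγ.mono fun t ht => congrArg Prod.fst ht⟩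

theorem mem_posTangentConeAt_preimage {c : E → F} {c' : E →L[ℝ] F} {x v : E} {S : Set F}
    (hc : HasStrictFDerivAt c c' x) (hsurj : c'.range = ⊤) (hker : c'.ker.ClosedComplemented)
    (hray : ∃ᶠ t : ℝ in 𝓝[>] 0, c x + t • c' v ∈ S) : v ∈ posTangentConeAt (c ⁻¹' S) x := by
  obtain ⟨γ, rfl, hγ, hcγ⟩ :=
    exists_curve_of_hasStrictFDerivAt_of_range_eq_top hc hsurj hker v
  refine mem_posTangentConeAt_of_hasDerivAt hγ ?_
  refine (hray.and_eventually (hcγ.filter_mono nhdsWithin_le_nhds)).mono fun t ht => ?_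
  simpa only [Set.mem_preimage, ht.2] using ht.1

end TangentCone

section Multipliers

theorem surjective_pi_of_linearIndependent {K V ι : Type*} [Field K] [AddCommGroup V]
    [Module K V] [Finite ι] {L : ι → Module.Dual K V} (hL : LinearIndependent K L) :
    Function.Surjective (LinearMap.pi L) := by
  have := Fintype.ofFinite ι
  rw [← LinearMap.dualMap_injective_iff, injective_iff_map_eq_zero]
  intro ψ hψ
  have hsum : ∑ i, ψ (Pi.single i 1) • L i = 0 := by
    ext v
    have hv : ψ (LinearMap.pi L v) = 0 := LinearMap.congr_fun hψ v
    rw [pi_eq_sum_univ' (LinearMap.pi L v), map_sum] at hv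
    simpa [mul_comm] using hv
  have hcoeff := Fintype.linearIndependent_iff.1 hL _ hsum
  ext i
  simpa using hcoeff i

variable {E ι : Type*} [Fintype ι]

theorem exists_multipliers_of_isLocalMinOn_preimage [NormedAddCommGroup E] [NormedSpace ℝ E]
    [CompleteSpace E] {f : E → ℝ} {f' : StrongDual ℝ E} {c : E → ι → ℝ} {c' : ι → StrongDual ℝ E}
    {x : E} {S : Set (ι → ℝ)} (hf : HasFDerivAt f f' x)
    (hc : ∀ i, HasStrictFDerivAt (c · i) (c' i) x) (hlin : LinearIndependent ℝ c')
    (hmin : IsLocalMinOn f (c ⁻¹' S) x) (hx : c x ∈ S) :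
    ∃ μ : ι → ℝ, f' + ∑ i, μ i • c' i = 0 ∧
      ∀ w : ι → ℝ, (∃ᶠ t : ℝ in 𝓝[>] 0, c x + t • w ∈ S) → ∑ i, μ i * w i ≤ 0 := by
  let L : ι → Module.Dual ℝ E := fun i => c' i
  have hsurj : Function.Surjective (LinearMap.pi L) :=
    surjective_pi_of_linearIndependent
      (hlin.map' (ContinuousLinearMap.coeLM ℝ)
        (LinearMap.ker_eq_bot.2 ContinuousLinearMap.coe_injective))
  have hnonneg (v : E) (hv : ∃ᶠ t : ℝ in 𝓝[>] 0, c x + t • (c' · v) ∈ S) : 0 ≤ f' v :=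
    hmin.hasFDerivWithinAt_nonneg hf.hasFDerivWithinAt <|
      mem_posTangentConeAt_preimage (hasStrictFDerivAt_pi.2 hc) (LinearMap.range_eq_top.2 hsurj)
        (ContinuousLinearMap.ker_closedComplemented_of_finiteDimensional_range _) hv
  have hker : ∀ v, (∀ i, c' i v = 0) → f' v = 0 := by
    have hstay (v : E) (hv : ∀ i, c' i v = 0) : 0 ≤ f' v := by
      refine hnonneg v (Eventually.of_forall fun t => ?_).frequently
      rw [show (c' · v) = 0 from funext hv, smul_zero, add_zero]
      exact hx
    intro v hv
    refine le_antisymm ?_ (hstay v hv)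
    simpa using hstay (-v) (by simpa using hv)
  have hspan : (f' : Module.Dual ℝ E) ∈ Submodule.span ℝ (Set.range L) :=
    mem_span_of_iInf_ker_le_ker fun v hv => hker v (by simpa [L] using hv)
  obtain ⟨a, ha⟩ := (Submodule.mem_span_range_iff_exists_fun ℝ).1 hspan
  have hf' (v : E) : f' v = ∑ i, a i * c' i v := by
    simpa [L] using (LinearMap.congr_fun ha v).symm
  refine ⟨-a, by ext v; simp [hf'], fun w hw => ?_⟩
  obtain ⟨v, rfl⟩ := hsurj w
  simpa [hf', L] using hnonneg v hw

theorem exists_multipliers_of_isLocalMinOn_preimage_of_hasGradientAt [NormedAddCommGroup E]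
    [InnerProductSpace ℝ E] [CompleteSpace E] {f : E → ℝ} {u : E} {c : E → ι → ℝ} {v : ι → E}
    {x : E} {S : Set (ι → ℝ)} (hf : HasGradientAt f u x)
    (hc : ∀ i, HasStrictFDerivAt (c · i) (InnerProductSpace.toDual ℝ E (v i)) x)
    (hlin : LinearIndependent ℝ v) (hmin : IsLocalMinOn f (c ⁻¹' S) x) (hx : c x ∈ S) :
    ∃ μ : ι → ℝ, u + ∑ i, μ i • v i = 0 ∧
      ∀ w : ι → ℝ, (∃ᶠ t : ℝ in 𝓝[>] 0, c x + t • w ∈ S) → ∑ i, μ i * w i ≤ 0 := by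
  have hlin' : LinearIndependent ℝ fun i => InnerProductSpace.toDual ℝ E (v i) :=
    hlin.map' (InnerProductSpace.toDual ℝ E).toLinearEquiv.toLinearMap
      (InnerProductSpace.toDual ℝ E).toLinearEquiv.ker
  obtain ⟨μ, hμ, hpolar⟩ :=
    exists_multipliers_of_isLocalMinOn_preimage hf.hasFDerivAt hc hlin' hmin hx
  exact ⟨μ, (InnerProductSpace.toDual ℝ E).injective (by simpa using hμ), hpolar⟩

end Multipliers

theorem sum_extend_smul_eq_sum_subtype {ι R M : Type*} [Zero R] [AddCommMonoid M] [SMulWithZero R M]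
    {A : Set ι} [Fintype A] {s : Finset ι} (hAs : A ⊆ s) (a : A → R) (u : ι → M) :
    ∑ i ∈ s, Function.extend Subtype.val a 0 i • u i = ∑ i : A, a i • u i := by
  refine (Finset.sum_of_injOn Subtype.val Subtype.val_injective.injOn
    (fun i _ => hAs i.2) (fun i _ hi => ?_) fun i _ => ?_).symm
  · rw [Function.extend_apply' _ _ _ (by simpa using hi), Pi.zero_apply, zero_smul]
  · rw [Subtype.val_injective.extend_apply]

namespace MPSC

variable {n p q m : ℕ} (P : MPSC n p q m) (zs : Euc n)

/-- The constraints that vanish at `z*` and whose gradients enter MPSC-LICQ; the four summands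
carry the functions `g`, `h`, `G` and `H`. -/
abbrev ActiveIndex : Type :=
  {i // i ∈ P.Ig zs} ⊕ Fin q ⊕ {i // i ∈ P.IGs zs ∪ P.IGH zs} ⊕ {i // i ∈ P.IHs zs ∪ P.IGH zs}

/-- The values at `z` of the constraint functions that are active at `z*`. -/
def activeConstraint (z : Euc n) : P.ActiveIndex zs → ℝ :=
  Sum.elim (fun i => P.g i.1 z) (Sum.elim (fun j => P.h j z)
    (Sum.elim (fun i => P.G i.1 z) fun i => P.H i.1 z))

/-- The gradients at `z` of the constraint functions that are active at `z*`; MPSC-LICQ is their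
linear independence at `z = z*`. -/
def activeGradient (z : Euc n) : P.ActiveIndex zs → Euc n :=
  Sum.elim (fun i => P.g' i.1 z) (Sum.elim (fun j => P.h' j z)
    (Sum.elim (fun i => P.G' i.1 z) fun i => P.H' i.1 z))

/-- The values of the active constraints allowed at a feasible point near `z*`. Since `i` is an
index of both `G` and `H` precisely when `i ∈ I_GH*`, the last condition says `GᵢHᵢ = 0` there. -/
def switchingCone : Set (P.ActiveIndex zs → ℝ) :=
  {y | (∀ i, y (.inl i) ≤ 0) ∧ (∀ j, y (.inr (.inl j)) = 0) ∧
    (∀ i, i.1 ∈ P.IGs zs → y (.inr (.inr (.inl i))) = 0) ∧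
    (∀ i, i.1 ∈ P.IHs zs → y (.inr (.inr (.inr i))) = 0) ∧
    ∀ i k, i.1 = k.1 → y (.inr (.inr (.inl i))) * y (.inr (.inr (.inr k))) = 0}

variable {P zs}

theorem activeConstraint_eq_zero (hzs : zs ∈ P.Feas) : P.activeConstraint zs zs = 0 := by
  ext (i | j | i | i)
  · exact i.2
  · exact hzs.2.1 j
  · exact i.2.elim And.left And.left
  · exact i.2.elim And.right And.right

theorem hasStrictFDerivAt_activeConstraint (e : P.ActiveIndex zs) (z : Euc n) :
    HasStrictFDerivAt (P.activeConstraint zs · e)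
      (InnerProductSpace.toDual ℝ (Euc n) (P.activeGradient zs z e)) z := by
  have hasGradientAt : ∀ z, HasGradientAt (P.activeConstraint zs · e) (P.activeGradient zs z e) z :=
    match e with
    | .inl i => P.grad_g i
    | .inr (.inl j) => P.grad_h j
    | .inr (.inr (.inl i)) => P.grad_G i
    | .inr (.inr (.inr i)) => P.grad_H i
  have continuous_gradient : Continuous (P.activeGradient zs · e) :=
    match e with
    | .inl i => P.cont_g' i
    | .inr (.inl j) => P.cont_h' j
    | .inr (.inr (.inl i)) => P.cont_G' i
    | .inr (.inr (.inr i)) => P.cont_H' i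
  exact hasStrictFDerivAt_of_hasGradientAt_of_continuousAt (.of_forall hasGradientAt)
    continuous_gradient.continuousAt

theorem zero_mem_switchingCone : (0 : P.ActiveIndex zs → ℝ) ∈ P.switchingCone zs := by
  simp [switchingCone]

theorem smul_mem_switchingCone {y : P.ActiveIndex zs → ℝ} (hy : y ∈ P.switchingCone zs) {t : ℝ}
    (ht : 0 ≤ t) : t • y ∈ P.switchingCone zs := by
  obtain ⟨hg, hh, hG, hH, hGH⟩ := hy
  refine ⟨fun i => mul_nonpos_of_nonneg_of_nonpos ht (hg i), fun j => ?_, fun i hi => ?_,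
    fun i hi => ?_, fun i k hik => ?_⟩
  · simp [hh j]
  · simp [hG i hi]
  · simp [hH i hi]
  · simp [mul_mul_mul_comm t, hGH i k hik]

theorem single_g_neg_one_mem_switchingCone (i : {i // i ∈ P.Ig zs}) :
    Pi.single (.inl i) (-1) ∈ P.switchingCone zs := by
  refine ⟨fun k => ?_, by simp⟩
  obtain rfl | hk := eq_or_ne k i <;> simp [*]

theorem single_G_mem_switchingCone {i : {i // i ∈ P.IGs zs ∪ P.IGH zs}} (hi : i.1 ∈ P.IGH zs)
    (s : ℝ) : Pi.single (.inr (.inr (.inl i))) s ∈ P.switchingCone zs := by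
  have ne_of_mem_IGs (k : {i // i ∈ P.IGs zs ∪ P.IGH zs}) (hk : k.1 ∈ P.IGs zs) : k ≠ i := by
    rintro rfl
    exact hk.2 hi.2
  refine ⟨by simp, by simp, fun k hk => ?_, by simp, by simp⟩
  simp [ne_of_mem_IGs k hk]

theorem single_H_mem_switchingCone {i : {i // i ∈ P.IHs zs ∪ P.IGH zs}} (hi : i.1 ∈ P.IGH zs)
    (s : ℝ) : Pi.single (.inr (.inr (.inr i))) s ∈ P.switchingCone zs := by
  have ne_of_mem_IHs (k : {i // i ∈ P.IHs zs ∪ P.IGH zs}) (hk : k.1 ∈ P.IHs zs) : k ≠ i := by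
    rintro rfl
    exact hk.1 hi.1
  refine ⟨by simp, by simp, by simp, fun k hk => ?_, by simp⟩
  simp [ne_of_mem_IHs k hk]

theorem eventually_mem_Feas_of_mem_switchingCone (hzs : zs ∈ P.Feas) :
    ∀ᶠ z in 𝓝 zs, P.activeConstraint zs z ∈ P.switchingCone zs → z ∈ P.Feas := by
  have inactive_neg : ∀ᶠ z in 𝓝 zs, ∀ i, i ∉ P.Ig zs → P.g i z < 0 := by
    refine eventually_all.2 fun i => eventually_imp_distrib_left.2 fun hi => ?_
    exact (P.grad_g i zs).continuousAt.eventually_lt_const (lt_of_le_of_ne (hzs.1 i) hi)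
  filter_upwards [inactive_neg] with z hz ⟨hg, hh, hG, hH, hGH⟩
  refine ⟨fun i => ?_, hh, fun i => ?_⟩
  · by_cases hi : i ∈ P.Ig zs
    · exact hg ⟨i, hi⟩
    · exact (hz i hi).le
  · by_cases hGi : P.G i zs = 0 <;> by_cases hHi : P.H i zs = 0
    · exact hGH ⟨i, .inr ⟨hGi, hHi⟩⟩ ⟨i, .inr ⟨hGi, hHi⟩⟩ rfl
    · exact mul_eq_zero_of_left (hG ⟨i, .inl ⟨hGi, hHi⟩⟩ ⟨hGi, hHi⟩) _
    · exact mul_eq_zero_of_right _ (hH ⟨i, .inl ⟨hGi, hHi⟩⟩ ⟨hGi, hHi⟩)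
    · exact absurd (hzs.2.2 i) (mul_ne_zero hGi hHi)

theorem isLocalMinOn_preimage_switchingCone (hzs : zs ∈ P.Feas)
    (hmin : IsLocalMinOn P.f P.Feas zs) :
    IsLocalMinOn P.f (P.activeConstraint zs ⁻¹' P.switchingCone zs) zs :=
  hmin.filter_mono <| nhdsWithin_le_iff.2 <| eventually_nhdsWithin_iff.2 <|
    eventually_mem_Feas_of_mem_switchingCone hzs

theorem multiplier_signs_of_mem_polar_switchingCone {μ : P.ActiveIndex zs → ℝ}
    (hμ : ∀ w ∈ P.switchingCone zs, ∑ e, μ e * w e ≤ 0) :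
    (∀ i, 0 ≤ μ (.inl i)) ∧ (∀ i, i.1 ∈ P.IGH zs → μ (.inr (.inr (.inl i))) = 0) ∧
      ∀ i, i.1 ∈ P.IGH zs → μ (.inr (.inr (.inr i))) = 0 := by
  have mul_nonpos {e s} (hs : Pi.single e s ∈ P.switchingCone zs) : μ e * s ≤ 0 := by
    simpa [Pi.single_apply] using hμ _ hs
  have eq_zero {e} (he : ∀ s, Pi.single e s ∈ P.switchingCone zs) : μ e = 0 := by
    linarith [mul_nonpos (he 1), mul_nonpos (he (-1))]
  refine ⟨fun i => ?_, fun i hi => ?_, fun i hi => ?_⟩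
  · linarith [mul_nonpos (single_g_neg_one_mem_switchingCone i)]
  · exact eq_zero (single_G_mem_switchingCone hi)
  · exact eq_zero (single_H_mem_switchingCone hi)

theorem notMem_of_mem_IHs {i : Fin m} (hi : i ∈ P.IHs zs) : i ∉ P.IGs zs ∪ P.IGH zs :=
  fun h => hi.1 (h.elim And.left And.left)

theorem notMem_of_mem_IGs {i : Fin m} (hi : i ∈ P.IGs zs) : i ∉ P.IHs zs ∪ P.IGH zs :=
  fun h => hi.2 (h.elim And.right And.right)

theorem exists_isSMult_of_activeGradient {μ : P.ActiveIndex zs → ℝ}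
    (hstat : P.f' zs + ∑ e, μ e • P.activeGradient zs zs e = 0)
    (hg : ∀ i, 0 ≤ μ (.inl i))
    (hG : ∀ i, i.1 ∈ P.IGH zs → μ (.inr (.inr (.inl i))) = 0)
    (hH : ∀ i, i.1 ∈ P.IGH zs → μ (.inr (.inr (.inr i))) = 0) :
    ∃ (lg : Fin p → ℝ) (lh : Fin q → ℝ) (lG lH : Fin m → ℝ), P.IsSMult zs lg lh lG lH := by
  let lg := Function.extend Subtype.val (fun i => μ (.inl i)) 0
  let lG := Function.extend Subtype.val (fun i => μ (.inr (.inr (.inl i)))) 0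
  let lH := Function.extend Subtype.val (fun i => μ (.inr (.inr (.inr i)))) 0
  have lg_apply (i) : lg (Subtype.val i) = μ (.inl i) := Subtype.val_injective.extend_apply ..
  have lG_apply (i) : lG (Subtype.val i) = μ (.inr (.inr (.inl i))) :=
    Subtype.val_injective.extend_apply ..
  have lH_apply (i) : lH (Subtype.val i) = μ (.inr (.inr (.inr i))) :=
    Subtype.val_injective.extend_apply ..
  refine ⟨lg, fun j => μ (.inr (.inl j)), lG, lH, ?_, ?_, ?_, ?_, ?_⟩
  · rw [← hstat, Finset.sum_add_distrib, sum_extend_smul_eq_sum_subtype (by simp),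
      sum_extend_smul_eq_sum_subtype (by simp), sum_extend_smul_eq_sum_subtype (by simp)]
    simp only [Fintype.sum_sum_type, activeGradient, Sum.elim_inl, Sum.elim_inr]
    abel
  · exact fun i hi => (lg_apply ⟨i, hi⟩).symm ▸ hg ⟨i, hi⟩
  · exact fun i hi => Function.extend_apply' _ _ _ fun ⟨k, hk⟩ =>
      notMem_of_mem_IHs hi (hk ▸ k.2)
  · exact fun i hi => Function.extend_apply' _ _ _ fun ⟨k, hk⟩ =>
      notMem_of_mem_IGs hi (hk ▸ k.2)
  · exact fun i hi =>
      ⟨(lG_apply ⟨i, .inr hi⟩).trans (hG _ hi), (lH_apply ⟨i, .inr hi⟩).trans (hH _ hi)⟩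

end MPSC

/-- a local minimizer of the MPSC satisfying MPSC-LICQ is S-stationary. -/
theorem mpsc_LICQ_S_stationary {n p q m : ℕ} (P : MPSC n p q m) (zs : Euc n)
    (hfeas : zs ∈ P.Feas) (hmin : IsLocalMinOn P.f P.Feas zs) (hlicq : P.LICQ zs) :
    ∃ (lg : Fin p → ℝ) (lh : Fin q → ℝ) (lG lH : Fin m → ℝ),
      P.IsSMult zs lg lh lG lH := by
  have active_eq_zero := MPSC.activeConstraint_eq_zero hfeas
  obtain ⟨μ, hstat, hray⟩ := exists_multipliers_of_isLocalMinOn_preimage_of_hasGradientAt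
    (P.grad_f zs) (MPSC.hasStrictFDerivAt_activeConstraint · zs)
    hlicq (MPSC.isLocalMinOn_preimage_switchingCone hfeas hmin)
    (active_eq_zero ▸ MPSC.zero_mem_switchingCone)
  have hpolar : ∀ w ∈ P.switchingCone zs, ∑ e, μ e * w e ≤ 0 := by
    refine fun w hw => hray w (Eventually.frequently ?_)
    filter_upwards [self_mem_nhdsWithin] with t ht
    rw [active_eq_zero, zero_add]
    exact MPSC.smul_mem_switchingCone hw (Set.mem_Ioi.1 ht).le
  obtain ⟨hg, hG, hH⟩ := MPSC.multiplier_signs_of_mem_polar_switchingCone hpolar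
  exact MPSC.exists_isSMult_of_activeGradient hstat hg hG hH
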